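/- arXiv:2010.03637 — 2 statements merged into one kernel-verified Lean document; each statement's English description precedes it below -/
import Mathlib

section
/- Let M be the free metabelian group on the set {a₁,…,a_m} ∪ {t₁,…,t_k}, and for each 1 ≤ i < j ≤ k fix a designated element a_{ij} ∈ {a₁,…,a_m}. Let R₁ = {[t_i,t_j]·a_{ij}⁻¹ : 1 ≤ i < j ≤ k} and R'₂ = {[a_i, a_j] : 1 ≤ i,j ≤ m} ∪ {[a_i, a_j^{t_s}] : 1 ≤ i,j ≤ m, 1 ≤ s ≤ k}. For a word u in the letters t₁^{±1},…,t_k^{±1} with exponent sums m₁,…,m_k, let ū = t₁^{m₁}⋯t_k^{m_k}. Then for every a ∈ {a₁,…,a_m} and every reduced word u in t₁^{±1},…,t_k^{±1} of length ℓ, the element (a^u)⁻¹·a^{ū} of M can be written in M as a product of at most 4ℓ² + 2ℓ conjugates of elements of (R₁ ∪ R'₂) ∪ (R₁ ∪ R'₂)⁻¹. -/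
open Function

/-- The length of the reduced word representing an element of a free group. -/
noncomputable def freeNorm {X : Type*} (w : FreeGroup X) : ℕ :=
  letI := Classical.decEq X
  w.toWord.length

/-- `w` equals a product of exactly `N` conjugates of elements of `R ∪ R⁻¹`. -/
def AreaIs {G : Type*} [Group G] (R : Set G) (w : G) (N : ℕ) : Prop :=
  ∃ r f : Fin N → G, (∀ i, r i ∈ R ∨ (r i)⁻¹ ∈ R) ∧
    w = (List.ofFn fun i => (f i)⁻¹ * r i * f i).prod

/-- The area of `w` with respect to the relators `R` is at most `N`. -/
def AreaLe {G : Type*} [Group G] (R : Set G) (w : G) (N : ℕ) : Prop :=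
  ∃ N' ≤ N, AreaIs R w N'

/-- `f ≼ g` : there is `C > 0` with `f n ≤ C * g (C * n) + C * n + C` for all `n`. -/
def Dominates (f g : ℕ → ℕ) : Prop :=
  ∃ C : ℕ, 0 < C ∧ ∀ n, f n ≤ C * g (C * n) + C * n + C

/-- `f ≈ g` : mutual domination. -/
def DehnEquiv (f g : ℕ → ℕ) : Prop := Dominates f g ∧ Dominates g f

/-- `δ` is the Dehn function of the presentation with relator set `R`. -/
def IsDehnFunctionOf {X : Type*} (R : Set (FreeGroup X)) (δ : ℕ → ℕ) : Prop :=
  ∀ n, IsLeast {N | ∀ w ∈ Subgroup.normalClosure R, freeNorm w ≤ n → AreaLe R w N} (δ n)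

/-- A group is metabelian if its derived subgroup is abelian. -/
def IsMetabelian (G : Type*) [Group G] : Prop :=
  ∀ a b : G, a ∈ commutator G → b ∈ commutator G → a * b = b * a

instance derivedSeriesNormalInst {G : Type*} [Group G] (n : ℕ) : (derivedSeries G n).Normal :=
  derivedSeries_normal G n

/-- The free metabelian group on `X`: the free group modulo its second derived subgroup. -/
abbrev FreeMetabelian (X : Type*) := FreeGroup X ⧸ derivedSeries (FreeGroup X) 2

/-- The word length of `w` in the free metabelian group is at most `n`. -/
def mNormLe {X : Type*} (w : FreeMetabelian X) (n : ℕ) : Prop :=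
  ∃ v : FreeGroup X, QuotientGroup.mk' (derivedSeries (FreeGroup X) 2) v = w ∧ freeNorm v ≤ n

/-- `δ` is the relative Dehn function (in the variety of metabelian groups) of the
relative presentation with relator set `R`. -/
def IsRelDehnFunctionOf {X : Type*} (R : Set (FreeMetabelian X)) (δ : ℕ → ℕ) : Prop :=
  ∀ n, IsLeast {N | ∀ w ∈ Subgroup.normalClosure R, mNormLe w n → AreaLe R w N} (δ n)

/-- The paper's commutator convention: `[x, y] = x⁻¹ * y⁻¹ * x * y`. -/
def pcomm {G : Type*} [Group G] (x y : G) : G := x⁻¹ * y⁻¹ * x * y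

/-- A group has torsion-free rank `k` if it has a finite-index subgroup isomorphic to `ℤ^k`. -/
def HasTFRank (Q : Type*) [Group Q] (k : ℕ) : Prop :=
  ∃ H : Subgroup Q, H.index ≠ 0 ∧ Nonempty (H ≃* Multiplicative (Fin k → ℤ))

/-- `G ⧸ A` is abelian and has torsion-free rank `j`. -/
def QuotientRankProp {G : Type*} [Group G] (A : Subgroup G) [A.Normal] (j : ℕ) : Prop :=
  (∀ x y : G ⧸ A, x * y = y * x) ∧ HasTFRank (G ⧸ A) j

/-- The set of torsion-free ranks of quotients `G ⧸ A` by abelian normal subgroups `A`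
with `G ⧸ A` abelian. -/
def abelianRankSet (G : Type*) [Group G] : Set ℕ :=
  {j | ∃ A : Subgroup G, ∃ h : A.Normal, (∀ x y : G, x ∈ A → y ∈ A → x * y = y * x) ∧
    @QuotientRankProp G _ A h j}

/-- Generator `aᵢ` of the free metabelian group on `{a₁,…,a_m} ∪ {t₁,…,t_k}`. -/
noncomputable def ma {m k : ℕ} (i : Fin m) : FreeMetabelian (Fin m ⊕ Fin k) :=
  QuotientGroup.mk' (derivedSeries (FreeGroup (Fin m ⊕ Fin k)) 2) (FreeGroup.of (Sum.inl i))

/-- Generator `tₛ` of the free metabelian group on `{a₁,…,a_m} ∪ {t₁,…,t_k}`. -/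
noncomputable def mgt {m k : ℕ} (s : Fin k) : FreeMetabelian (Fin m ⊕ Fin k) :=
  QuotientGroup.mk' (derivedSeries (FreeGroup (Fin m ⊕ Fin k)) 2) (FreeGroup.of (Sum.inr s))

/-- The image in the free metabelian group of a word `u` in the letters `t₁^{±1},…,t_k^{±1}`. -/
noncomputable def tword {m k : ℕ} (u : FreeGroup (Fin k)) : FreeMetabelian (Fin m ⊕ Fin k) :=
  FreeGroup.lift (fun s => (mgt s : FreeMetabelian (Fin m ⊕ Fin k))) u

/-- The exponent sum of the letter `s` in a word of the free group on `Fin k`. -/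
def expSum {k : ℕ} (s : Fin k) : FreeGroup (Fin k) →* Multiplicative ℤ :=
  FreeGroup.lift fun i => Multiplicative.ofAdd (if i = s then (1 : ℤ) else 0)

/-- The ordered word `ū = t₁^{m₁}⋯t_k^{m_k}` with the same exponent sums as `u`,
as an element of the free metabelian group. -/
noncomputable def obar {m k : ℕ} (u : FreeGroup (Fin k)) : FreeMetabelian (Fin m ⊕ Fin k) :=
  (List.ofFn fun s : Fin k => (mgt s : FreeMetabelian (Fin m ⊕ Fin k)) ^
    (Multiplicative.toAdd (expSum s u))).prod

/-- The relator set `R'₂ = {[aᵢ,aⱼ]} ∪ {[aᵢ,aⱼ^{tₛ}]}`. -/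
noncomputable def R2' (m k : ℕ) : Set (FreeMetabelian (Fin m ⊕ Fin k)) :=
  {w | (∃ i j : Fin m, w = pcomm (ma i) (ma j)) ∨
       (∃ (i j : Fin m) (s : Fin k), w = pcomm (ma i) ((mgt s)⁻¹ * ma j * mgt s))}

/-- The relator set `R₁ = {[tᵢ,tⱼ]·a_{ij}⁻¹ : i < j}` for designated letters `a_{ij}`. -/
noncomputable def R1 (m k : ℕ) (aij : Fin k → Fin k → Fin m) :
    Set (FreeMetabelian (Fin m ⊕ Fin k)) :=
  {w | ∃ i j : Fin k, i < j ∧ w = pcomm (mgt i) (mgt j) * (ma (aij i j))⁻¹}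

/-!
Write `c = w v⁻¹` with `w` the image of `u` and `v` its ordered form. Up to conjugation,
`(a^w)⁻¹ a^v` is `[a, c⁻¹]`, where `c` lies in the derived subgroup. In a metabelian group the
area of `[a, c]`, as a function of `c` in the derived subgroup, is subadditive and invariant under
inversion and conjugation. Moving the first letter of a word of length `ℓ + 1` to its place in the
ordered form of the rest crosses at most `ℓ` letters, and each crossing contributes a conjugate of
some `[tᵢ, tⱼ]^{±1}`, of cost `3`: two for replacing `[tᵢ, tⱼ]` by `a_{ij}`, one for `[a, a_{ij}]`.
-/

section Area

open scoped Pointwise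

variable {G : Type*} [Group G] {R : Set G} {x y : G} {M N : ℕ}

lemma inv_conjugatesOfSet (S : Set G) :
    (Group.conjugatesOfSet S)⁻¹ = Group.conjugatesOfSet S⁻¹ := by
  ext x
  simp only [Set.mem_inv, Group.mem_conjugatesOfSet_iff, isConj_iff]
  constructor
  · rintro ⟨r, hr, g, hg⟩
    exact ⟨r⁻¹, Set.inv_mem_inv.2 hr, g, by rw [← conj_inv, hg, inv_inv]⟩
  · rintro ⟨r, hr, g, rfl⟩
    exact ⟨r⁻¹, hr, g, conj_inv.symm⟩

lemma image_conj_conjugatesOfSet_subset (S : Set G) (g : G) :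
    MulAut.conj g '' Group.conjugatesOfSet S ⊆ Group.conjugatesOfSet S := by
  rintro _ ⟨x, hx, rfl⟩
  exact Group.conj_mem_conjugatesOfSet hx

lemma mem_conjugatesOfSet_union_inv_iff :
    x ∈ Group.conjugatesOfSet (R ∪ R⁻¹) ↔ ∃ r f : G, (r ∈ R ∨ r⁻¹ ∈ R) ∧ f⁻¹ * r * f = x := by
  simp only [Group.mem_conjugatesOfSet_iff, isConj_iff, Set.mem_union, Set.mem_inv]
  constructor
  · rintro ⟨r, hr, g, rfl⟩
    exact ⟨r, g⁻¹, hr, by rw [inv_inv]⟩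
  · rintro ⟨r, f, hr, rfl⟩
    exact ⟨r, hr, f⁻¹, by rw [inv_inv]⟩

lemma areaIs_iff_mem_pow : AreaIs R x N ↔ x ∈ Group.conjugatesOfSet (R ∪ R⁻¹) ^ N := by
  rw [Set.mem_pow]
  constructor
  · rintro ⟨r, f, hr, rfl⟩
    exact ⟨fun i => ⟨_, mem_conjugatesOfSet_union_inv_iff.2 ⟨r i, f i, hr i, rfl⟩⟩, rfl⟩
  · rintro ⟨c, rfl⟩
    choose r f hr hc using fun i => mem_conjugatesOfSet_union_inv_iff.1 (c i).2
    exact ⟨r, f, hr, by simp only [hc]⟩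

namespace AreaLe

lemma mono (hx : AreaLe R x M) (hMN : M ≤ N) : AreaLe R x N :=
  let ⟨K, hK, h⟩ := hx
  ⟨K, hK.trans hMN, h⟩

lemma one : AreaLe R 1 0 := ⟨0, le_rfl, areaIs_iff_mem_pow.2 (by simp)⟩

lemma of_mem (hx : x ∈ R) : AreaLe R x 1 := by
  refine ⟨1, le_rfl, areaIs_iff_mem_pow.2 ?_⟩
  rw [pow_one]
  exact Group.subset_conjugatesOfSet (Or.inl hx)

lemma mul (hx : AreaLe R x M) (hy : AreaLe R y N) : AreaLe R (x * y) (M + N) := by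
  obtain ⟨M', hM, hx⟩ := hx
  obtain ⟨N', hN, hy⟩ := hy
  refine ⟨M' + N', add_le_add hM hN, ?_⟩
  rw [areaIs_iff_mem_pow] at hx hy ⊢
  rw [pow_add]
  exact Set.mul_mem_mul hx hy

lemma inv (hx : AreaLe R x N) : AreaLe R x⁻¹ N := by
  obtain ⟨N', hN, hx⟩ := hx
  refine ⟨N', hN, ?_⟩
  rw [areaIs_iff_mem_pow] at hx ⊢
  rwa [← Set.mem_inv, ← inv_pow, inv_conjugatesOfSet, Set.union_inv, inv_inv, Set.union_comm]

lemma conj (hx : AreaLe R x N) (g : G) : AreaLe R (g * x * g⁻¹) N := by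
  obtain ⟨N', hN, hx⟩ := hx
  refine ⟨N', hN, ?_⟩
  rw [areaIs_iff_mem_pow] at hx ⊢
  have hgx := Set.mem_image_of_mem (MulAut.conj g) hx
  rw [Set.image_pow] at hgx
  exact Set.pow_subset_pow_left (image_conj_conjugatesOfSet_subset _ g) hgx

lemma pcomm_right (hx : AreaLe R x N) (a : G) : AreaLe R (pcomm a x) (N + N) := by
  simpa only [pcomm, inv_inv] using (hx.inv.conj a⁻¹).mul hx

end AreaLe

end Area

section Pcomm

variable {G : Type*} [Group G]

lemma pcomm_mul_right (a x y : G) : pcomm a (x * y) = pcomm a y * (y⁻¹ * pcomm a x * y) := by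
  simp only [pcomm]
  group

lemma pcomm_inv_right (a x : G) : pcomm a x⁻¹ = x * (pcomm a x)⁻¹ * x⁻¹ := by
  simp only [pcomm]
  group

lemma pcomm_mem_commutator (x y : G) : pcomm x y ∈ commutator G := by
  simpa only [pcomm, commutator_def, commutatorElement_def, inv_inv] using
    Subgroup.commutator_mem_commutator (Subgroup.mem_top x⁻¹) (Subgroup.mem_top y⁻¹)

lemma IsMetabelian.pcomm_conj_right (hG : IsMetabelian G) (a g : G) {c : G}
    (hc : c ∈ commutator G) : pcomm a (g * c * g⁻¹) = g * pcomm a c * g⁻¹ := by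
  have hca : a⁻¹ * c⁻¹ * a ∈ commutator G := by
    simpa only [inv_inv] using
      (inferInstance : (commutator G).Normal).conj_mem _ (inv_mem hc) a⁻¹
  calc pcomm a (g * c * g⁻¹)
    _ = g * ((pcomm a g)⁻¹ * ((a⁻¹ * c⁻¹ * a) * pcomm a g) * c) * g⁻¹ := by
        simp only [pcomm]
        group
    _ = g * ((pcomm a g)⁻¹ * (pcomm a g * (a⁻¹ * c⁻¹ * a)) * c) * g⁻¹ := by
        rw [hG _ _ hca (pcomm_mem_commutator a g)]
    _ = g * pcomm a c * g⁻¹ := by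
        simp only [pcomm]
        group

end Pcomm

section CommAreaLe

/-- The element `c` lies in the derived subgroup and the area of `[a, c]` is at most `N`.
Membership in the derived subgroup makes this invariant under conjugation of `c` when the group is
metabelian. -/
structure CommAreaLe {G : Type*} [Group G] (R : Set G) (a c : G) (N : ℕ) : Prop where
  mem_commutator : c ∈ commutator G
  areaLe : AreaLe R (pcomm a c) N

open scoped commutatorElement

namespace CommAreaLe

variable {G : Type*} [Group G] {R : Set G} {a x y z : G} {M N : ℕ}

lemma mono (hx : CommAreaLe R a x M) (hMN : M ≤ N) : CommAreaLe R a x N where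
  mem_commutator := hx.mem_commutator
  areaLe := hx.areaLe.mono hMN

lemma one : CommAreaLe R a 1 0 where
  mem_commutator := one_mem _
  areaLe := by simpa [pcomm] using AreaLe.one

lemma mul (hx : CommAreaLe R a x M) (hy : CommAreaLe R a y N) :
    CommAreaLe R a (x * y) (M + N) where
  mem_commutator := mul_mem hx.mem_commutator hy.mem_commutator
  areaLe := by
    rw [pcomm_mul_right, add_comm]
    simpa only [inv_inv] using hy.areaLe.mul (hx.areaLe.conj y⁻¹)

lemma inv (hx : CommAreaLe R a x N) : CommAreaLe R a x⁻¹ N where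
  mem_commutator := inv_mem hx.mem_commutator
  areaLe := by
    rw [pcomm_inv_right]
    exact hx.areaLe.inv.conj x

lemma conj (hG : IsMetabelian G) (hx : CommAreaLe R a x N) (g : G) :
    CommAreaLe R a (g * x * g⁻¹) N where
  mem_commutator := (inferInstance : (commutator G).Normal).conj_mem x hx.mem_commutator g
  areaLe := by
    rw [hG.pcomm_conj_right a g hx.mem_commutator]
    exact hx.areaLe.conj g

lemma commutator_symm (h : CommAreaLe R a ⁅x, y⁆ N) : CommAreaLe R a ⁅y, x⁆ N :=
  commutatorElement_inv x y ▸ h.inv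

lemma commutator_mul_right (hG : IsMetabelian G) (hy : CommAreaLe R a ⁅x, y⁆ M)
    (hz : CommAreaLe R a ⁅x, z⁆ N) : CommAreaLe R a ⁅x, y * z⁆ (M + N) := by
  have hxyz : ⁅x, y * z⁆ = ⁅x, y⁆ * (y * ⁅x, z⁆ * y⁻¹) := by
    simp only [commutatorElement_def]
    group
  exact hxyz ▸ hy.mul (hz.conj hG y)

lemma commutator_inv_right (hG : IsMetabelian G) (h : CommAreaLe R a ⁅x, y⁆ N) :
    CommAreaLe R a ⁅x, y⁻¹⁆ N := by
  have hxy : ⁅x, y⁻¹⁆ = y⁻¹ * ⁅x, y⁆⁻¹ * y⁻¹⁻¹ := by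
    simp only [commutatorElement_def]
    group
  exact hxy ▸ h.inv.conj hG y⁻¹

lemma commutator_pow_right (hG : IsMetabelian G) (h : CommAreaLe R a ⁅x, y⁆ N) (n : ℕ) :
    CommAreaLe R a ⁅x, y ^ n⁆ (N * n) := by
  induction n with
  | zero => simpa using one
  | succ n ih =>
    rw [pow_succ, Nat.mul_succ]
    exact ih.commutator_mul_right hG h

lemma commutator_zpow_right (hG : IsMetabelian G) (h : CommAreaLe R a ⁅x, y⁆ N) (n : ℤ) :
    CommAreaLe R a ⁅x, y ^ n⁆ (N * n.natAbs) := by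
  obtain ⟨n, rfl | rfl⟩ := n.eq_nat_or_neg
  · simpa using h.commutator_pow_right hG n
  · simpa using (h.commutator_pow_right hG n).commutator_inv_right hG

lemma commutator_zpow_zpow (hG : IsMetabelian G) (h : CommAreaLe R a ⁅x, y⁆ N) (p q : ℤ) :
    CommAreaLe R a ⁅x ^ p, y ^ q⁆ (N * p.natAbs * q.natAbs) :=
  (h.commutator_symm.commutator_zpow_right hG p).commutator_symm.commutator_zpow_right hG q

lemma of_pcomm_mul_inv_mem {b : G} (hxy : pcomm x y * b⁻¹ ∈ R) (hab : pcomm a b ∈ R) :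
    CommAreaLe R a (pcomm x y) 3 where
  mem_commutator := pcomm_mem_commutator x y
  areaLe := by
    rw [← inv_mul_cancel_right (pcomm x y) b, pcomm_mul_right]
    simpa only [inv_inv] using
      (AreaLe.of_mem hab).mul (((AreaLe.of_mem hxy).pcomm_right a).conj b⁻¹)

lemma commutator_of_pcomm (hG : IsMetabelian G) (h : CommAreaLe R a (pcomm x y) N) :
    CommAreaLe R a ⁅y, x⁆ N := by
  have hyx : ⁅y, x⁆ = (y * x) * (pcomm x y)⁻¹ * (y * x)⁻¹ := by
    simp only [pcomm, commutatorElement_def]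
    group
  exact hyx ▸ h.inv.conj hG (y * x)

lemma areaLe_conj_inv_mul_conj {w v : G} (h : CommAreaLe R a (w * v⁻¹) N) :
    AreaLe R ((w⁻¹ * a * w)⁻¹ * (v⁻¹ * a * v)) N := by
  convert h.inv.areaLe.conj w⁻¹ using 1
  simp only [pcomm]
  group

end CommAreaLe

end CommAreaLe

section Collection

/-- The ordered product `t₁^{n₁}⋯t_k^{n_k}`. -/
def orderedPower {G : Type*} [Group G] {k : ℕ} (t : Fin k → G) (n : Fin k → ℤ) : G :=
  (List.ofFn fun s => t s ^ n s).prod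

lemma orderedPower_zero {G : Type*} [Group G] {k : ℕ} (t : Fin k → G) :
    orderedPower t 0 = 1 := by
  simp [orderedPower]

lemma orderedPower_succ {G : Type*} [Group G] {k : ℕ} (t : Fin (k + 1) → G)
    (n : Fin (k + 1) → ℤ) :
    orderedPower t n = t 0 ^ n 0 * orderedPower (Fin.tail t) (Fin.tail n) := by
  rw [orderedPower, List.ofFn_succ, List.prod_cons]
  rfl

lemma tail_single_zero_add {k : ℕ} (e : ℤ) (n : Fin (k + 1) → ℤ) :
    Fin.tail (Pi.single 0 e + n) = Fin.tail n := by
  ext s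
  simp [Fin.tail]

lemma tail_single_succ_add {k : ℕ} (j : Fin k) (e : ℤ) (n : Fin (k + 1) → ℤ) :
    Fin.tail (Pi.single j.succ e + n) = Pi.single j e + Fin.tail n := by
  ext s
  simp [Fin.tail, Pi.single_apply]

/-- The vector `(m₁,…,m_k)` of exponent sums of a word, written additively. -/
def exponentVector {k : ℕ} (u : FreeGroup (Fin k)) : Fin k → ℤ :=
  fun s => (expSum s u).toAdd

lemma exponentVector_one {k : ℕ} : exponentVector (1 : FreeGroup (Fin k)) = 0 := by
  ext s
  simp [exponentVector]

lemma exponentVector_of_zpow_mul {k : ℕ} (i : Fin k) (e : ℤ) (u : FreeGroup (Fin k)) :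
    exponentVector (FreeGroup.of i ^ e * u) = Pi.single i e + exponentVector u := by
  ext s
  simp [exponentVector, expSum, Pi.single_apply, eq_comm]

lemma exists_mk_cons_eq_zpow_mul {α : Type*} (x : α × Bool) :
    ∃ e : ℤ, e.natAbs = 1 ∧ ∀ L : List (α × Bool),
      FreeGroup.mk (x :: L) = FreeGroup.of x.1 ^ e * FreeGroup.mk L := by
  obtain ⟨i, _ | _⟩ := x
  · exact ⟨-1, rfl, fun L => by simp [FreeGroup.of, FreeGroup.invRev]⟩
  · exact ⟨1, rfl, fun L => by simp [FreeGroup.of]⟩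

lemma exists_mk_eq_length_eq_freeNorm {α : Type*} (u : FreeGroup α) :
    ∃ L : List (α × Bool), FreeGroup.mk L = u ∧ L.length = freeNorm u :=
  let := Classical.decEq α
  ⟨u.toWord, FreeGroup.mk_toWord, rfl⟩

lemma sum_natAbs_exponentVector_mk_le {k : ℕ} (L : List (Fin k × Bool)) :
    ∑ s, (exponentVector (FreeGroup.mk L) s).natAbs ≤ L.length := by
  induction L with
  | nil => simp [← FreeGroup.one_eq_mk, exponentVector_one]
  | cons x L ih =>
    obtain ⟨e, he, hmk⟩ := exists_mk_cons_eq_zpow_mul x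
    have hsingle : ∑ s, (Pi.single (M := fun _ => ℤ) x.1 e s).natAbs = 1 := by
      rw [Finset.sum_eq_single x.1] <;> simp +contextual [he]
    rw [hmk, exponentVector_of_zpow_mul, List.length_cons]
    calc ∑ s, ((Pi.single x.1 e + exponentVector (FreeGroup.mk L) : Fin k → ℤ) s).natAbs
      _ ≤ ∑ s, ((Pi.single (M := fun _ => ℤ) x.1 e s).natAbs +
            (exponentVector (FreeGroup.mk L) s).natAbs) :=
          Finset.sum_le_sum fun s _ => Int.natAbs_add_le _ _
      _ ≤ L.length + 1 := by
          rw [Finset.sum_add_distrib, hsingle]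
          omega

open scoped commutatorElement

variable {G : Type*} [Group G] {R : Set G} {a : G} {N k : ℕ} {t : Fin k → G}

lemma commAreaLe_zpow_mul_orderedPower (hG : IsMetabelian G)
    (ht : ∀ i j, i < j → CommAreaLe R a ⁅t j, t i⁆ N) (i : Fin k) (e : ℤ) (n : Fin k → ℤ) :
    CommAreaLe R a (t i ^ e * orderedPower t n * (orderedPower t (Pi.single i e + n))⁻¹)
      (N * e.natAbs * ∑ s, (n s).natAbs) := by
  induction k with
  | zero => exact i.elim0
  | succ k ih =>
    rw [orderedPower_succ t n, orderedPower_succ t (_ + n)]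
    induction i using Fin.cases with
    | zero =>
      have hone : t 0 ^ e * (t 0 ^ n 0 * orderedPower (Fin.tail t) (Fin.tail n)) *
          (t 0 ^ (e + n 0) * orderedPower (Fin.tail t) (Fin.tail n))⁻¹ = 1 := by
        rw [zpow_add, ← mul_assoc, mul_inv_cancel]
      rw [tail_single_zero_add, Pi.add_apply, Pi.single_eq_same, hone]
      exact CommAreaLe.one.mono (Nat.zero_le _)
    | succ j =>
      -- The letter first crosses `t₀ ^ n₀`, then moves within the tail, conjugated by `t₀ ^ n₀`.
      have hcross := (ht 0 j.succ j.succ_pos).commutator_zpow_zpow hG e (n 0)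
      have htail := ih (t := Fin.tail t) (fun i j hij => ht _ _ (Fin.succ_lt_succ_iff.2 hij)) j
        (Fin.tail n)
      rw [tail_single_succ_add, Pi.add_apply, Pi.single_eq_of_ne j.succ_ne_zero.symm, zero_add,
        Fin.sum_univ_succ, mul_add]
      change CommAreaLe R a _ (_ + N * e.natAbs * ∑ s, (Fin.tail n s).natAbs)
      convert hcross.mul (htail.conj hG (t 0 ^ n 0)) using 1
      simp only [commutatorElement_def, Fin.tail]
      group

lemma commAreaLe_lift_mul_orderedPower_inv (hG : IsMetabelian G)
    (ht : ∀ i j, i < j → CommAreaLe R a ⁅t j, t i⁆ N) (L : List (Fin k × Bool)) :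
    CommAreaLe R a
      (FreeGroup.lift t (FreeGroup.mk L) * (orderedPower t (exponentVector (FreeGroup.mk L)))⁻¹)
      (N * L.length.choose 2) := by
  induction L with
  | nil => simpa [← FreeGroup.one_eq_mk, exponentVector_one, orderedPower_zero] using CommAreaLe.one
  | cons x L ih =>
    obtain ⟨e, he, hmk⟩ := exists_mk_cons_eq_zpow_mul x
    have hletter := (commAreaLe_zpow_mul_orderedPower hG ht x.1 e
      (exponentVector (FreeGroup.mk L))).mono
        (Nat.mul_le_mul_left _ (sum_natAbs_exponentVector_mk_le L))
    rw [he, mul_one] at hletter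
    rw [hmk, exponentVector_of_zpow_mul, map_mul, map_zpow, FreeGroup.lift_apply_of,
      List.length_cons, Nat.choose_succ_succ' _ 1, Nat.choose_one_right, mul_add, add_comm]
    convert (ih.conj hG (t x.1 ^ e)).mul hletter using 1
    group

end Collection

lemma isMetabelian_quotient_derivedSeries_two (G : Type*) [Group G] :
    IsMetabelian (G ⧸ derivedSeries G 2) := by
  intro x y hx hy
  have hmk := QuotientGroup.mk'_surjective (derivedSeries G 2)
  rw [← derivedSeries_one, ← map_derivedSeries_eq hmk] at hx hy
  obtain ⟨x, hx, rfl⟩ := hx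
  obtain ⟨y, hy, rfl⟩ := hy
  rw [← commutatorElement_eq_one_iff_mul_comm, ← map_commutatorElement, ← MonoidHom.mem_ker,
    QuotientGroup.ker_mk']
  exact Subgroup.commutator_mem_commutator hx hy

theorem ordering_cost_general {G : Type*} [Group G] (hG : IsMetabelian G) {R : Set G} {k : ℕ}
    {t : Fin k → G} {a : G} {b : Fin k → Fin k → G}
    (htb : ∀ i j, i < j → pcomm (t i) (t j) * (b i j)⁻¹ ∈ R)
    (hab : ∀ i j, i < j → pcomm a (b i j) ∈ R) (u : FreeGroup (Fin k)) :
    AreaLe R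
      (((FreeGroup.lift t u)⁻¹ * a * FreeGroup.lift t u)⁻¹ *
        ((orderedPower t (exponentVector u))⁻¹ * a * orderedPower t (exponentVector u)))
      (3 * (freeNorm u).choose 2) := by
  obtain ⟨L, rfl, hL⟩ := exists_mk_eq_length_eq_freeNorm u
  rw [← hL]
  have hu := commAreaLe_lift_mul_orderedPower_inv hG (fun i j hij =>
    (CommAreaLe.of_pcomm_mul_inv_mem (htb i j hij) (hab i j hij)).commutator_of_pcomm hG) L
  exact hu.areaLe_conj_inv_mul_conj

/-- In the free metabelian group, `(a^u)⁻¹·a^{ū}` is a product of at most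
`4ℓ² + 2ℓ` conjugates of elements of `(R₁ ∪ R'₂)^{±1}`, where `ℓ` is the reduced length
of the word `u` in the letters `t₁^{±1},…,t_k^{±1}`. -/
theorem ordering_cost (m k : ℕ) (aij : Fin k → Fin k → Fin m) (a : Fin m)
    (u : FreeGroup (Fin k)) (ℓ : ℕ) (hu : freeNorm u = ℓ) :
    AreaLe (R1 m k aij ∪ R2' m k)
      (((tword u)⁻¹ * ma a * tword u)⁻¹ * ((obar u)⁻¹ * ma a * obar u))
      (4 * ℓ ^ 2 + 2 * ℓ) := by
  subst hu
  refine (ordering_cost_general (isMetabelian_quotient_derivedSeries_two _)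
    (fun i j hij => Or.inl ⟨i, j, hij, rfl⟩)
    (fun i j _ => Or.inr (Or.inl ⟨a, aij i j, rfl⟩)) u).mono ?_
  linarith [Nat.choose_le_pow (freeNorm u) 2]
end

section
/- Let R = ℤ[x₁,…,x_k] and let M = R^m be a free R-module of finite rank m. For every submodule S ⊆ M there exist a finite generating set f₁,…,f_l of S and a real constant K > 1 such that: every nonzero g ∈ S with deg(g) ≤ n and |g| ≤ p can be written as g = Σ_{i=1}^l α_i f_i with α_i ∈ R, deg(α_i f_i) ≤ deg(g) for every i with α_i f_i ≠ 0, and Σ_{i=1}^l |α_i| ≤ p·K^{n^k}. -/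
/-- The sum of the absolute values of the integer coefficients of a multivariable
polynomial over `ℤ`. -/
noncomputable def polyNorm {k : ℕ} (p : MvPolynomial (Fin k) ℤ) : ℕ :=
  ∑ d ∈ p.support, (p.coeff d).natAbs

/-- The norm of an element of the free module `ℤ[x₁,…,x_k]^m`. -/
noncomputable def vecNorm {k m : ℕ} (g : Fin m → MvPolynomial (Fin k) ℤ) : ℕ :=
  ∑ j, polyNorm (g j)

/-- The degree of an element of the free module `ℤ[x₁,…,x_k]^m` : the maximal total
degree of a monomial occurring in one of the components. -/
noncomputable def vecDeg {k m : ℕ} (g : Fin m → MvPolynomial (Fin k) ℤ) : ℕ :=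
  Finset.univ.sup fun j => (g j).totalDegree

/-!
Divide `g` by a strong Gröbner basis of `S` over `ℤ` for the degree-lexicographic order. Every step
cancels the leading term of the current remainder, involves only terms of degree at most
`n = deg g`, and multiplies the norm by a bounded factor. There are at most `(n + 1)^k * m` such
terms, hence at most that many steps, and `(n + 1)^k * m ≤ 2^k * m * n^k` for `1 ≤ n`.

For `n = 0 < k` the required bound is `p` itself, so the constant elements of `S` are treated
separately: a Graver basis lets `g` split off generators without cancellation, and each of them
lowers the norm by at least one.
-/

section

open MvPolynomial Finset

theorem exists_finset_subset_forall_exists_le {X A : Type*} [PartialOrder A]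
    [WellQuasiOrderedLE A] (φ : X → A) (s : Set X) :
    ∃ F : Finset X, ↑F ⊆ s ∧ ∀ x ∈ s, ∃ y ∈ F, φ y ≤ φ x := by
  classical
  have hfin : {a | Minimal (· ∈ φ '' s) a}.Finite :=
    WellQuasiOrderedLE.finite_of_isAntichain (setOfPred_minimal_antichain _)
  have hsub : ↑hfin.toFinset ⊆ φ '' s := fun a ha => (hfin.mem_toFinset.1 ha).prop
  obtain ⟨F, hFs, hF⟩ := Finset.subset_set_image_iff.1 hsub
  refine ⟨F, hFs, fun x hx => ?_⟩
  obtain ⟨a, hax, ha⟩ :=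
    (Set.isPWO_of_wellQuasiOrderedLE (φ '' s)).exists_le_minimal (Set.mem_image_of_mem φ hx)
  obtain ⟨y, hyF, rfl⟩ := Finset.mem_image.1 (hF.symm ▸ hfin.mem_toFinset.2 ha)
  exact ⟨y, hyF, hax⟩

theorem sum_equivFin_symm {X A : Type*} [AddCommMonoid A] (F : Finset X) (φ : X → A) :
    ∑ i, φ (F.equivFin.symm i) = ∑ x ∈ F, φ x :=
  (Equiv.sum_comp F.equivFin.symm fun x : F => φ x).trans (F.sum_coe_sort φ)

variable {k m : ℕ}

theorem polyNorm_eq_sum_of_support_subset {p : MvPolynomial (Fin k) ℤ} {U : Finset (Fin k →₀ ℕ)}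
    (h : p.support ⊆ U) : polyNorm p = ∑ d ∈ U, (p.coeff d).natAbs :=
  sum_subset h fun d _ hd => by simpa using hd

@[simp]
theorem polyNorm_monomial (e : Fin k →₀ ℕ) (a : ℤ) : polyNorm (monomial e a) = a.natAbs := by
  rw [polyNorm_eq_sum_of_support_subset support_monomial_subset]
  simp

@[simp]
theorem polyNorm_zero : polyNorm (0 : MvPolynomial (Fin k) ℤ) = 0 := by
  simp [polyNorm]

@[simp]
theorem polyNorm_one : polyNorm (1 : MvPolynomial (Fin k) ℤ) = 1 :=
  polyNorm_monomial 0 1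

@[simp]
theorem polyNorm_neg (p : MvPolynomial (Fin k) ℤ) : polyNorm (-p) = polyNorm p := by
  simp [polyNorm]

theorem polyNorm_add_le (p q : MvPolynomial (Fin k) ℤ) :
    polyNorm (p + q) ≤ polyNorm p + polyNorm q := by
  classical
  rw [polyNorm_eq_sum_of_support_subset (support_add (p := p) (q := q)),
    polyNorm_eq_sum_of_support_subset (subset_union_left (s₁ := p.support) (s₂ := q.support)),
    polyNorm_eq_sum_of_support_subset (subset_union_right (s₁ := p.support) (s₂ := q.support)),
    ← sum_add_distrib]
  exact sum_le_sum fun d _ => coeff_add d p q ▸ Int.natAbs_add_le _ _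

theorem polyNorm_sub_le (p q : MvPolynomial (Fin k) ℤ) :
    polyNorm (p - q) ≤ polyNorm p + polyNorm q := by
  simpa [sub_eq_add_neg] using polyNorm_add_le p (-q)

theorem polyNorm_monomial_mul (e : Fin k →₀ ℕ) (a : ℤ) (p : MvPolynomial (Fin k) ℤ) :
    polyNorm (monomial e a * p) = a.natAbs * polyNorm p := by
  have hsupp : (monomial e a * p).support ⊆ p.support.map (addLeftEmbedding e) := by
    intro d hd
    rw [mem_support_iff, coeff_monomial_mul'] at hd
    obtain ⟨hed, hne⟩ := ite_ne_right_iff.1 hd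
    exact mem_map.2 ⟨d - e, mem_support_iff.2 (right_ne_zero_of_mul hne),
      add_tsub_cancel_of_le hed⟩
  rw [polyNorm_eq_sum_of_support_subset hsupp, sum_map, polyNorm, mul_sum]
  simp [coeff_monomial_mul, Int.natAbs_mul]

/-- The free module `ℤ[x₁,…,x_k]^m`. -/
abbrev PolyVec (k m : ℕ) : Type := Fin m → MvPolynomial (Fin k) ℤ

/-- The pair `(d, j)` encodes the term `x^d e_j` of the free module `ℤ[x₁,…,x_k]^m`. -/
abbrev VecTerm (k m : ℕ) : Type := (Fin k →₀ ℕ) × Fin m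

/-- The integer coefficient of the term `t` in `g`. -/
noncomputable def termCoeff (g : PolyVec k m) (t : VecTerm k m) : ℤ :=
  (g t.2).coeff t.1

@[simp]
theorem termCoeff_add (g h : PolyVec k m) (t : VecTerm k m) :
    termCoeff (g + h) t = termCoeff g t + termCoeff h t := by
  simp [termCoeff]

@[simp]
theorem termCoeff_sub (g h : PolyVec k m) (t : VecTerm k m) :
    termCoeff (g - h) t = termCoeff g t - termCoeff h t := by
  simp [termCoeff]

theorem termCoeff_monomial_smul_add (e d : Fin k →₀ ℕ) (j : Fin m) (a : ℤ) (g : PolyVec k m) :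
    termCoeff (monomial e a • g) (e + d, j) = a * termCoeff g (d, j) := by
  simp [termCoeff, coeff_monomial_mul]

/-- The finite set of terms occurring in `g` with nonzero coefficient. -/
noncomputable def termSupport (g : PolyVec k m) : Finset (VecTerm k m) :=
  univ.biUnion fun j => (g j).support ×ˢ {j}

@[simp]
theorem mem_termSupport {g : PolyVec k m} {t : VecTerm k m} :
    t ∈ termSupport g ↔ termCoeff g t ≠ 0 := by
  obtain ⟨d, j⟩ := t
  simp [termSupport, termCoeff]

@[simp]
theorem termSupport_eq_empty {g : PolyVec k m} : termSupport g = ∅ ↔ g = 0 := by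
  simp only [Finset.ext_iff, mem_termSupport, notMem_empty, iff_false, not_not, funext_iff,
    MvPolynomial.ext_iff, Prod.forall]
  exact forall_comm

theorem termSupport_subset_iff {g : PolyVec k m} {U : Finset (VecTerm k m)} :
    termSupport g ⊆ U ↔ ∀ t ∉ U, termCoeff g t = 0 := by
  simp only [subset_iff, mem_termSupport, not_imp_comm]

theorem termSupport_add_subset {g h : PolyVec k m} {U : Finset (VecTerm k m)}
    (hg : termSupport g ⊆ U) (hh : termSupport h ⊆ U) : termSupport (g + h) ⊆ U := by
  simp_all [termSupport_subset_iff]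

theorem termSupport_sub_subset {g h : PolyVec k m} {U : Finset (VecTerm k m)}
    (hg : termSupport g ⊆ U) (hh : termSupport h ⊆ U) : termSupport (g - h) ⊆ U := by
  simp_all [termSupport_subset_iff]

theorem exists_of_mem_termSupport_monomial_smul {e : Fin k →₀ ℕ} {a : ℤ} {g : PolyVec k m}
    {t : VecTerm k m} (ht : t ∈ termSupport (monomial e a • g)) :
    ∃ d, (d, t.2) ∈ termSupport g ∧ e + d = t.1 := by
  rw [mem_termSupport, termCoeff, Pi.smul_apply, smul_eq_mul, coeff_monomial_mul'] at ht
  obtain ⟨het, hne⟩ := ite_ne_right_iff.1 ht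
  exact ⟨t.1 - e, mem_termSupport.2 (right_ne_zero_of_mul hne), add_tsub_cancel_of_le het⟩

theorem vecNorm_eq_sum_of_termSupport_subset {g : PolyVec k m} {U : Finset (VecTerm k m)}
    (h : termSupport g ⊆ U) : vecNorm g = ∑ t ∈ U, (termCoeff g t).natAbs := by
  have hsum : ∑ t ∈ termSupport g, (termCoeff g t).natAbs = vecNorm g :=
    sum_finset_product_right _ univ (fun j => (g j).support) fun t => by simp [termCoeff]
  rw [← hsum]
  exact sum_subset h fun t _ ht => by simpa using ht

theorem natAbs_termCoeff_le_vecNorm (g : PolyVec k m) (t : VecTerm k m) :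
    (termCoeff g t).natAbs ≤ vecNorm g := by
  rw [vecNorm_eq_sum_of_termSupport_subset (subset_insert t (termSupport g))]
  exact single_le_sum_of_canonicallyOrdered (f := fun s => (termCoeff g s).natAbs)
    (mem_insert_self t _)

theorem vecNorm_pos {g : PolyVec k m} (hg : g ≠ 0) : 0 < vecNorm g := by
  obtain ⟨t, ht⟩ := nonempty_iff_ne_empty.2 (mt termSupport_eq_empty.1 hg)
  exact (Int.natAbs_pos.2 (mem_termSupport.1 ht)).trans_le (natAbs_termCoeff_le_vecNorm g t)

theorem vecNorm_sub_le (g h : PolyVec k m) : vecNorm (g - h) ≤ vecNorm g + vecNorm h := by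
  rw [vecNorm, vecNorm, vecNorm, ← sum_add_distrib]
  exact sum_le_sum fun j _ => polyNorm_sub_le (g j) (h j)

theorem vecNorm_monomial_smul (e : Fin k →₀ ℕ) (a : ℤ) (g : PolyVec k m) :
    vecNorm (monomial e a • g) = a.natAbs * vecNorm g := by
  simp [vecNorm, mul_sum, polyNorm_monomial_mul]

theorem vecNorm_sub_monomial_smul_le {f g : PolyVec k m} (e : Fin k →₀ ℕ) {a : ℤ} {b : ℕ}
    (ha : a.natAbs ≤ vecNorm g) (hb : vecNorm f ≤ b) :
    vecNorm (g - monomial e a • f) ≤ vecNorm g * (b + 1) :=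
  calc vecNorm (g - monomial e a • f) ≤ vecNorm g + a.natAbs * vecNorm f :=
        vecNorm_monomial_smul e a f ▸ vecNorm_sub_le g _
    _ ≤ vecNorm g + vecNorm g * b := by gcongr
    _ = vecNorm g * (b + 1) := by ring

/-- The terms of total degree at most `n`. -/
noncomputable def termsOfDegreeLE (k m n : ℕ) : Finset (VecTerm k m) :=
  (Finsupp.finite_of_degree_le n).toFinset ×ˢ univ

@[simp]
theorem mem_termsOfDegreeLE {n : ℕ} {t : VecTerm k m} :
    t ∈ termsOfDegreeLE k m n ↔ t.1.degree ≤ n := by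
  simp [termsOfDegreeLE]

theorem vecDeg_le_iff {g : PolyVec k m} {n : ℕ} :
    vecDeg g ≤ n ↔ termSupport g ⊆ termsOfDegreeLE k m n := by
  simp only [vecDeg, Finset.sup_le_iff, mem_univ, true_imp_iff, totalDegree, subset_iff,
    mem_termSupport, mem_termsOfDegreeLE, Prod.forall, mem_support_iff]
  exact forall_comm

theorem card_termsOfDegreeLE_le (k m n : ℕ) : #(termsOfDegreeLE k m n) ≤ (n + 1) ^ k * m := by
  let box : Finset (Fin k →₀ ℕ) := Iic (Finsupp.equivFunOnFinite.symm fun _ => n)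
  have hbox : #box ≤ (n + 1) ^ k := by
    rw [Finsupp.card_Iic]
    simpa using Nat.pow_le_pow_right n.succ_pos
      (card_le_univ (Finsupp.equivFunOnFinite.symm fun _ : Fin k => n).support)
  have hsub : termsOfDegreeLE k m n ⊆ box ×ˢ univ := fun t ht =>
    mem_product.2 ⟨mem_Iic.2 fun i =>
      (Finsupp.le_degree i t.1).trans (mem_termsOfDegreeLE.1 ht), mem_univ _⟩
  calc #(termsOfDegreeLE k m n) ≤ #box * m := by simpa using card_le_card hsub
    _ ≤ (n + 1) ^ k * m := Nat.mul_le_mul_right m hbox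

/-- `g` is a combination of the elements of `F` with coefficients of total norm at most `B`, each
summand being supported in `U`. -/
def HasBoundedRep (F : Finset (PolyVec k m)) (U : Finset (VecTerm k m)) (g : PolyVec k m)
    (B : ℕ) : Prop :=
  ∃ α : PolyVec k m → MvPolynomial (Fin k) ℤ, g = ∑ f ∈ F, α f • f ∧
    (∀ f ∈ F, termSupport (α f • f) ⊆ U) ∧ ∑ f ∈ F, polyNorm (α f) ≤ B

namespace HasBoundedRep

variable {F F' : Finset (PolyVec k m)} {U U' : Finset (VecTerm k m)} {f g h : PolyVec k m}
  {B B' : ℕ}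

theorem mono (hg : HasBoundedRep F U g B) (hU : U ⊆ U') (hB : B ≤ B') :
    HasBoundedRep F U' g B' := by
  obtain ⟨α, hsum, hsupp, hnorm⟩ := hg
  exact ⟨α, hsum, fun f hf => (hsupp f hf).trans hU, hnorm.trans hB⟩

theorem mono_generators (hg : HasBoundedRep F U g B) (hF : F ⊆ F') : HasBoundedRep F' U g B := by
  classical
  obtain ⟨α, hsum, hsupp, hnorm⟩ := hg
  have hF' : F' ∩ F = F := inter_eq_right.2 hF
  refine ⟨fun f => if f ∈ F then α f else 0, ?_, fun f _ => ?_, ?_⟩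
  · simpa [ite_smul, hF'] using hsum
  · by_cases hf : f ∈ F
    · simpa [hf] using hsupp f hf
    · simp [hf, termSupport_eq_empty.2]
  · simpa [apply_ite polyNorm, hF'] using hnorm

theorem smul_mem (hf : f ∈ F) (r : MvPolynomial (Fin k) ℤ) (hr : termSupport (r • f) ⊆ U) :
    HasBoundedRep F U (r • f) (polyNorm r) := by
  classical
  refine ⟨fun x => if x = f then r else 0, by simp [hf], fun x _ => ?_, ?_⟩
  · rcases eq_or_ne x f with rfl | hxf
    · simpa using hr
    · simp [hxf, termSupport_eq_empty.2]
  · simp [apply_ite polyNorm, hf]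

theorem zero : HasBoundedRep F U 0 0 :=
  ⟨0, by simp, by simp [termSupport_eq_empty.2], by simp⟩

theorem add (hg : HasBoundedRep F U g B) (hh : HasBoundedRep F U h B') :
    HasBoundedRep F U (g + h) (B + B') := by
  obtain ⟨α, rfl, hαU, hα⟩ := hg
  obtain ⟨β, rfl, hβU, hβ⟩ := hh
  refine ⟨α + β, by simp [add_smul, sum_add_distrib], fun f hf => ?_, ?_⟩
  · rw [Pi.add_apply, add_smul]
    exact termSupport_add_subset (hαU f hf) (hβU f hf)
  · calc ∑ f ∈ F, polyNorm ((α + β) f)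
        ≤ ∑ f ∈ F, (polyNorm (α f) + polyNorm (β f)) :=
          sum_le_sum fun f _ => polyNorm_add_le (α f) (β f)
      _ ≤ B + B' := by
          rw [sum_add_distrib]
          exact Nat.add_le_add hα hβ

theorem of_sub_smul (hf : f ∈ F) {r : MvPolynomial (Fin k) ℤ} (hr : termSupport (r • f) ⊆ U)
    (hg : HasBoundedRep F U (g - r • f) B) : HasBoundedRep F U g (B + polyNorm r) := by
  simpa using hg.add (smul_mem hf r hr)

theorem exists_fin (hg : HasBoundedRep F U g B) :
    ∃ α : Fin #F → MvPolynomial (Fin k) ℤ, g = ∑ i, α i • (F.equivFin.symm i : PolyVec k m) ∧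
      (∀ i, termSupport (α i • (F.equivFin.symm i : PolyVec k m)) ⊆ U) ∧
      ∑ i, polyNorm (α i) ≤ B := by
  obtain ⟨α, hsum, hsupp, hnorm⟩ := hg
  exact ⟨fun i => α (F.equivFin.symm i),
    hsum.trans (sum_equivFin_symm F fun f => α f • f).symm,
    fun i => hsupp _ (F.equivFin.symm i).2,
    (sum_equivFin_symm F fun f => polyNorm (α f)).trans_le hnorm⟩

theorem mem_span (hg : HasBoundedRep F U g B) :
    g ∈ Submodule.span (MvPolynomial (Fin k) ℤ) (F : Set (PolyVec k m)) := by
  obtain ⟨α, rfl, -⟩ := hg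
  exact Submodule.sum_mem _ fun f hf => Submodule.smul_mem _ _ (Submodule.subset_span hf)

end HasBoundedRep

section GroebnerBasis

variable {ord : MonomialOrder (Fin k)} {S : Submodule (MvPolynomial (Fin k) ℤ) (PolyVec k m)}
  {F : Finset (PolyVec k m)} {f g : PolyVec k m} {s t : VecTerm k m}

/-- The sort key of a term in the term-over-position extension of `ord` to `ℤ[x₁,…,x_k]^m`:
exponents are compared first, and ties are broken by the component. -/
noncomputable def termKey (ord : MonomialOrder (Fin k)) (t : VecTerm k m) : ord.syn ×ₗ Fin m :=
  toLex (ord.toSyn t.1, t.2)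

theorem termKey_injective (ord : MonomialOrder (Fin k)) :
    Function.Injective (termKey ord : VecTerm k m → ord.syn ×ₗ Fin m) := fun s t h => by
  simpa [termKey, Prod.ext_iff] using h

theorem termKey_add_le_termKey_add (e : Fin k →₀ ℕ) (h : termKey ord s ≤ termKey ord t) :
    termKey ord (e + s.1, s.2) ≤ termKey ord (e + t.1, t.2) := by
  simpa [termKey, Prod.Lex.toLex_le_toLex] using h

theorem degree_le_of_termKey_degLex_le
    (h : termKey MonomialOrder.degLex s ≤ termKey MonomialOrder.degLex t) :
    s.1.degree ≤ t.1.degree :=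
  Finsupp.DegLex.monotone_degree (Prod.Lex.monotone_fst _ _ h)

/-- `t` is the leading term of `g` with respect to the term-over-position extension of `ord`. -/
def IsLeadingTerm (ord : MonomialOrder (Fin k)) (g : PolyVec k m) (t : VecTerm k m) : Prop :=
  t ∈ termSupport g ∧ ∀ s ∈ termSupport g, termKey ord s ≤ termKey ord t

theorem exists_isLeadingTerm (ord : MonomialOrder (Fin k)) (hg : g ≠ 0) :
    ∃ t, IsLeadingTerm ord g t :=
  exists_max_image _ (termKey ord) (nonempty_iff_ne_empty.2 (mt termSupport_eq_empty.1 hg))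

/-- A strong Gröbner basis of `S` over `ℤ`: every leading term of an element of `S`, taken together
with its coefficient, is divisible by that of some element of `F`. -/
def IsStrongGroebnerBasis (ord : MonomialOrder (Fin k))
    (S : Submodule (MvPolynomial (Fin k) ℤ) (PolyVec k m)) (F : Finset (PolyVec k m)) : Prop :=
  ↑F ⊆ (S : Set (PolyVec k m)) ∧ ∀ g ∈ S, ∀ t, IsLeadingTerm ord g t →
    ∃ f ∈ F, ∃ d ≤ t.1, IsLeadingTerm ord f (d, t.2) ∧ termCoeff f (d, t.2) ∣ termCoeff g t

theorem termCoeff_sub_monomial_smul {d : Fin k →₀ ℕ} (hd : d ≤ t.1) (a : ℤ) :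
    termCoeff (g - monomial (t.1 - d) a • f) t = termCoeff g t - a * termCoeff f (d, t.2) := by
  have h := termCoeff_monomial_smul_add (t.1 - d) d t.2 a f
  rw [tsub_add_cancel_of_le hd] at h
  rw [termCoeff_sub, h]

namespace IsLeadingTerm

variable {d : Fin k →₀ ℕ}

theorem termKey_le_of_mem_termSupport_monomial_smul (hf : IsLeadingTerm ord f (d, t.2))
    (hd : d ≤ t.1) (a : ℤ) (hs : s ∈ termSupport (monomial (t.1 - d) a • f)) :
    termKey ord s ≤ termKey ord t := by
  obtain ⟨c, hc, hcs⟩ := exists_of_mem_termSupport_monomial_smul hs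
  simpa [hcs, tsub_add_cancel_of_le hd] using termKey_add_le_termKey_add (t.1 - d) (hf.2 _ hc)

theorem termKey_le_of_mem_termSupport_sub (hg : IsLeadingTerm ord g t)
    (hf : IsLeadingTerm ord f (d, t.2)) (hd : d ≤ t.1) (a : ℤ)
    (hs : s ∈ termSupport (g - monomial (t.1 - d) a • f)) : termKey ord s ≤ termKey ord t := by
  by_cases hgs : s ∈ termSupport g
  · exact hg.2 s hgs
  · refine hf.termKey_le_of_mem_termSupport_monomial_smul hd a (mem_termSupport.2 fun h0 => ?_)
    have hg0 : termCoeff g s = 0 := by simpa using hgs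
    exact mem_termSupport.1 hs (by rw [termCoeff_sub, hg0, h0, sub_zero])

theorem exists_natAbs_termCoeff_sub_lt (hg : IsLeadingTerm ord g t)
    (hf : IsLeadingTerm ord f (d, t.2)) (hd : d ≤ t.1)
    (hndvd : ¬termCoeff f (d, t.2) ∣ termCoeff g t) :
    ∃ (e : Fin k →₀ ℕ) (a : ℤ), IsLeadingTerm ord (g - monomial e a • f) t ∧
      (termCoeff (g - monomial e a • f) t).natAbs < (termCoeff f (d, t.2)).natAbs := by
  set c := termCoeff f (d, t.2)
  have hrem : termCoeff (g - monomial (t.1 - d) (termCoeff g t / c) • f) t = termCoeff g t % c := by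
    rw [termCoeff_sub_monomial_smul hd, Int.emod_def, mul_comm]
  refine ⟨t.1 - d, termCoeff g t / c, ⟨?_, fun s hs =>
    hg.termKey_le_of_mem_termSupport_sub hf hd _ hs⟩, ?_⟩
  · rw [mem_termSupport, hrem]
    exact mt Int.dvd_of_emod_eq_zero hndvd
  · have hc : c ≠ 0 := mem_termSupport.1 hf.1
    have hnonneg := Int.emod_nonneg (termCoeff g t) hc
    have hlt := Int.emod_lt (termCoeff g t) hc
    rw [hrem]
    omega

end IsLeadingTerm

-- Take `f` with minimal leading coefficient among the candidates from Dickson's lemma: a nonzero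
-- remainder of the coefficient of `g` would be the leading coefficient of an element of `S`.
theorem exists_finset_leadingTerm_dvd (ord : MonomialOrder (Fin k))
    (S : Submodule (MvPolynomial (Fin k) ℤ) (PolyVec k m)) (j : Fin m) :
    ∃ F : Finset (PolyVec k m), ↑F ⊆ (S : Set (PolyVec k m)) ∧
      ∀ g ∈ S, ∀ d, IsLeadingTerm ord g (d, j) →
        ∃ f ∈ F, ∃ c ≤ d, IsLeadingTerm ord f (c, j) ∧ termCoeff f (c, j) ∣ termCoeff g (d, j) := by
  classical
  obtain ⟨F, hFS, hF⟩ := exists_finset_subset_forall_exists_le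
    (fun x : PolyVec k m × (Fin k →₀ ℕ) => (x.2, (termCoeff x.1 (x.2, j)).natAbs))
    {x | x.1 ∈ S ∧ IsLeadingTerm ord x.1 (x.2, j)}
  refine ⟨F.image Prod.fst, by simpa [Set.subset_def] using fun f d hf => (hFS hf).1, ?_⟩
  intro g hg d hgd
  have hne : (F.filter (·.2 ≤ d)).Nonempty := by
    obtain ⟨y, hyF, hy⟩ := hF (g, d) ⟨hg, hgd⟩
    exact ⟨y, mem_filter.2 ⟨hyF, hy.1⟩⟩
  obtain ⟨⟨f, c⟩, hfF, hmin⟩ := exists_min_image _ (fun x => (termCoeff x.1 (x.2, j)).natAbs) hne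
  obtain ⟨hfF, hcd : c ≤ d⟩ := mem_filter.1 hfF
  obtain ⟨hfS, hfc : IsLeadingTerm ord f (c, j)⟩ := hFS hfF
  refine ⟨f, mem_image_of_mem Prod.fst hfF, c, hcd, hfc, ?_⟩
  by_contra hndvd
  obtain ⟨e, a, hlead, hlt⟩ := hgd.exists_natAbs_termCoeff_sub_lt hfc hcd hndvd
  obtain ⟨y, hyF, hyd, hy⟩ := hF (g - monomial e a • f, d) ⟨S.sub_mem hg (S.smul_mem _ hfS), hlead⟩
  exact ((hmin y (mem_filter.2 ⟨hyF, hyd⟩)).trans hy).not_gt hlt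

theorem exists_isStrongGroebnerBasis (ord : MonomialOrder (Fin k))
    (S : Submodule (MvPolynomial (Fin k) ℤ) (PolyVec k m)) :
    ∃ F, IsStrongGroebnerBasis ord S F := by
  classical
  choose F hFS hF using exists_finset_leadingTerm_dvd ord S
  refine ⟨univ.biUnion F, by simpa using hFS, fun g hg t ht => ?_⟩
  obtain ⟨f, hf, hdvd⟩ := hF t.2 g hg t.1 ht
  exact ⟨f, mem_biUnion.2 ⟨t.2, mem_univ _, hf⟩, hdvd⟩

namespace IsStrongGroebnerBasis

theorem exists_reduction (hF : IsStrongGroebnerBasis ord S F) (hg : g ∈ S)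
    (ht : IsLeadingTerm ord g t) :
    ∃ f ∈ F, ∃ (e : Fin k →₀ ℕ) (a : ℤ), a.natAbs ≤ (termCoeff g t).natAbs ∧
      (∀ s ∈ termSupport (monomial e a • f), termKey ord s ≤ termKey ord t) ∧
      ∀ s ∈ termSupport (g - monomial e a • f), termKey ord s < termKey ord t := by
  obtain ⟨f, hfF, d, hd, hf, a, ha⟩ := hF.2 g hg t ht
  refine ⟨f, hfF, t.1 - d, a, ?_,
    fun s hs => hf.termKey_le_of_mem_termSupport_monomial_smul hd a hs, fun s hs => ?_⟩
  · rw [ha, Int.natAbs_mul]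
    exact Nat.le_mul_of_pos_left _ (Int.natAbs_pos.2 (mem_termSupport.1 hf.1))
  · refine (ht.termKey_le_of_mem_termSupport_sub hf hd a hs).lt_of_ne fun hst => ?_
    rw [termKey_injective ord hst, mem_termSupport, termCoeff_sub_monomial_smul hd, ha] at hs
    exact hs (by ring)

theorem hasBoundedRep (hF : IsStrongGroebnerBasis ord S F) {b : ℕ}
    (hb : ∀ f ∈ F, vecNorm f ≤ b) (U : Finset (VecTerm k m))
    (hU : ∀ t ∈ U, ∀ s, termKey ord s ≤ termKey ord t → s ∈ U) (hg : g ∈ S)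
    (hgU : termSupport g ⊆ U) : HasBoundedRep F U g (vecNorm g * (b + 2) ^ #U) := by
  induction U using Finset.strongInduction generalizing g with | H U ih => ?_
  rcases eq_or_ne g 0 with rfl | hg0
  · exact HasBoundedRep.zero.mono Subset.rfl (Nat.zero_le _)
  obtain ⟨t, ht⟩ := exists_isLeadingTerm ord hg0
  obtain ⟨f, hfF, e, a, ha, hle, hlt⟩ := hF.exists_reduction hg ht
  have htU : t ∈ U := hgU ht.1
  have haN : a.natAbs ≤ vecNorm g := ha.trans (natAbs_termCoeff_le_vecNorm g t)
  set r := g - monomial e a • f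
  set V := U.filter fun s => termKey ord s < termKey ord t
  have hVU : V ⊂ U := filter_ssubset.2 ⟨t, htU, lt_irrefl _⟩
  have hV : ∀ s ∈ V, ∀ s', termKey ord s' ≤ termKey ord s → s' ∈ V := by
    intro s hs s' hs'
    obtain ⟨hsU, hst⟩ := mem_filter.1 hs
    exact mem_filter.2 ⟨hU s hsU s' hs', hs'.trans_lt hst⟩
  have hrV : termSupport r ⊆ V := fun s hs =>
    mem_filter.2 ⟨hU t htU s (hlt s hs).le, hlt s hs⟩
  have hrS : r ∈ S := S.sub_mem hg (S.smul_mem _ (hF.1 hfF))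
  have hrN : vecNorm r ≤ vecNorm g * (b + 1) :=
    vecNorm_sub_monomial_smul_le e haN (hb f hfF)
  have hrep : HasBoundedRep F U g (vecNorm r * (b + 2) ^ #V + polyNorm (monomial e a)) :=
    ((ih V hVU hV hrS hrV).mono hVU.subset le_rfl).of_sub_smul hfF
      fun s hs => hU t htU s (hle s hs)
  rw [polyNorm_monomial] at hrep
  refine hrep.mono Subset.rfl ?_
  calc vecNorm r * (b + 2) ^ #V + a.natAbs
      ≤ vecNorm g * (b + 1) * (b + 2) ^ #V + vecNorm g * (b + 2) ^ #V := by
        gcongr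
        exact haN.trans (Nat.le_mul_of_pos_right _ (by positivity))
    _ = vecNorm g * (b + 2) ^ (#V + 1) := by ring
    _ ≤ vecNorm g * (b + 2) ^ #U := by
        gcongr
        · omega
        · exact card_lt_card hVU

end IsStrongGroebnerBasis

end GroebnerBasis

section GraverBasis

variable {S : AddSubgroup (PolyVec k m)} {U : Finset (VecTerm k m)} {F : Finset (PolyVec k m)}

/-- A Graver basis of the elements of `S` supported in `U`: each of them other than `0` splits off
an element of `F` without cancellation. -/
def IsGraverBasis (S : AddSubgroup (PolyVec k m)) (U : Finset (VecTerm k m))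
    (F : Finset (PolyVec k m)) : Prop :=
  (∀ f ∈ F, f ∈ S ∧ f ≠ 0 ∧ termSupport f ⊆ U) ∧ ∀ g ∈ S, g ≠ 0 → termSupport g ⊆ U →
    ∃ f ∈ F, vecNorm (g - f) + vecNorm f = vecNorm g

-- Comparing the positive and the negative parts of all coefficients separately makes `f` conformal
-- to `g`, so no coefficient cancels in `g - f`.
theorem exists_isGraverBasis (S : AddSubgroup (PolyVec k m)) (U : Finset (VecTerm k m)) :
    ∃ F, IsGraverBasis S U F := by
  obtain ⟨F, hFS, hF⟩ := exists_finset_subset_forall_exists_le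
    (fun (g : PolyVec k m) (t : U) => ((termCoeff g t).toNat, (-termCoeff g t).toNat))
    {g | g ∈ S ∧ g ≠ 0 ∧ termSupport g ⊆ U}
  refine ⟨F, fun f hf => hFS hf, fun g hg hg0 hgU => ?_⟩
  obtain ⟨f, hfF, hfg⟩ := hF g ⟨hg, hg0, hgU⟩
  have hfU : termSupport f ⊆ U := (hFS hfF).2.2
  refine ⟨f, hfF, ?_⟩
  rw [vecNorm_eq_sum_of_termSupport_subset hgU, vecNorm_eq_sum_of_termSupport_subset hfU,
    vecNorm_eq_sum_of_termSupport_subset (termSupport_sub_subset hgU hfU), ← sum_add_distrib]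
  refine sum_congr rfl fun t ht => ?_
  obtain ⟨hpos, hneg⟩ := hfg ⟨t, ht⟩
  rw [termCoeff_sub]
  dsimp only at hpos hneg
  omega

theorem IsGraverBasis.hasBoundedRep (hF : IsGraverBasis S U F) {g : PolyVec k m} (hg : g ∈ S)
    (hgU : termSupport g ⊆ U) : HasBoundedRep F U g (vecNorm g) := by
  induction hN : vecNorm g using Nat.strong_induction_on generalizing g with | _ N ih => ?_
  rcases eq_or_ne g 0 with rfl | hg0
  · exact HasBoundedRep.zero.mono Subset.rfl (Nat.zero_le N)
  obtain ⟨f, hfF, hfg⟩ := hF.2 g hg hg0 hgU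
  obtain ⟨hfS, hf0, hfU⟩ := hF.1 f hfF
  have hfpos : 0 < vecNorm f := vecNorm_pos hf0
  have hrep : HasBoundedRep F U (g - f) (vecNorm (g - f)) :=
    ih _ (by omega) (S.sub_mem hg hfS) (termSupport_sub_subset hgU hfU) rfl
  have hrepg : HasBoundedRep F U g (vecNorm (g - f) + polyNorm 1) :=
    .of_sub_smul hfF (by simpa using hfU) (by simpa using hrep)
  rw [polyNorm_one] at hrepg
  exact hrepg.mono Subset.rfl (by omega)

end GraverBasis

theorem IsStrongGroebnerBasis.hasBoundedRep_of_degLex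
    {S : Submodule (MvPolynomial (Fin k) ℤ) (PolyVec k m)} {F : Finset (PolyVec k m)}
    (hF : IsStrongGroebnerBasis MonomialOrder.degLex S F) {b : ℕ} (hb : ∀ f ∈ F, vecNorm f ≤ b)
    {g : PolyVec k m} (hg : g ∈ S) :
    HasBoundedRep F (termsOfDegreeLE k m (vecDeg g)) g
      (vecNorm g * (b + 2) ^ ((vecDeg g + 1) ^ k * m)) := by
  have hlower : ∀ t ∈ termsOfDegreeLE k m (vecDeg g), ∀ s,
      termKey MonomialOrder.degLex s ≤ termKey MonomialOrder.degLex t →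
        s ∈ termsOfDegreeLE k m (vecDeg g) := fun t ht s hst =>
    mem_termsOfDegreeLE.2 ((degree_le_of_termKey_degLex_le hst).trans (mem_termsOfDegreeLE.1 ht))
  refine (hF.hasBoundedRep hb _ hlower hg (vecDeg_le_iff.1 le_rfl)).mono Subset.rfl ?_
  gcongr
  · omega
  · exact card_termsOfDegreeLE_le k m (vecDeg g)

theorem exists_finset_hasBoundedRep (S : Submodule (MvPolynomial (Fin k) ℤ) (PolyVec k m)) :
    ∃ (F : Finset (PolyVec k m)) (K : ℕ), 1 < K ∧ ↑F ⊆ (S : Set (PolyVec k m)) ∧ ∀ g ∈ S,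
      HasBoundedRep F (termsOfDegreeLE k m (vecDeg g)) g (vecNorm g * K ^ vecDeg g ^ k) := by
  classical
  obtain ⟨F₁, hF₁⟩ := exists_isStrongGroebnerBasis MonomialOrder.degLex S
  obtain ⟨F₂, hF₂⟩ := exists_isGraverBasis S.toAddSubgroup (termsOfDegreeLE k m 0)
  set b := F₁.sup vecNorm
  refine ⟨F₁ ∪ F₂, (b + 2) ^ (2 ^ k * m + 1), Nat.one_lt_pow (by omega) (by omega), ?_, ?_⟩
  · rw [coe_union]
    exact Set.union_subset hF₁.1 fun f hf => (hF₂.1 f hf).1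
  intro g hg
  rcases Nat.eq_zero_or_pos (vecDeg g) with hdeg | hdeg
  · have hgU : termSupport g ⊆ termsOfDegreeLE k m 0 := vecDeg_le_iff.1 hdeg.le
    rw [hdeg]
    exact ((hF₂.hasBoundedRep hg hgU).mono_generators subset_union_right).mono Subset.rfl
      (Nat.le_mul_of_pos_right _ (by positivity))
  · refine ((hF₁.hasBoundedRep_of_degLex (fun f hf => le_sup hf) hg).mono_generators
      subset_union_left).mono Subset.rfl ?_
    rw [← pow_mul]
    refine Nat.mul_le_mul_left _ (Nat.pow_le_pow_right (by omega) ?_)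
    calc (vecDeg g + 1) ^ k * m ≤ (2 * vecDeg g) ^ k * m := by gcongr; omega
      _ = 2 ^ k * m * vecDeg g ^ k := by ring
      _ ≤ (2 ^ k * m + 1) * vecDeg g ^ k := by gcongr; omega

end

/-- Effective division (Gröbner basis) bound for submodules of a free
module of finite rank over `ℤ[x₁,…,x_k]`. -/
theorem division_mvpolynomial (k m : ℕ)
    (S : Submodule (MvPolynomial (Fin k) ℤ) (Fin m → MvPolynomial (Fin k) ℤ)) :
    ∃ (l : ℕ) (f : Fin l → (Fin m → MvPolynomial (Fin k) ℤ)) (K : ℝ), 1 < K ∧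
      Submodule.span (MvPolynomial (Fin k) ℤ) (Set.range f) = S ∧
      ∀ (n p : ℕ) (g : Fin m → MvPolynomial (Fin k) ℤ), g ∈ S → g ≠ 0 →
        vecDeg g ≤ n → vecNorm g ≤ p →
        ∃ α : Fin l → MvPolynomial (Fin k) ℤ,
          g = ∑ i, α i • f i ∧
          (∀ i, α i • f i ≠ 0 → vecDeg (α i • f i) ≤ vecDeg g) ∧
          ((∑ i, polyNorm (α i) : ℕ) : ℝ) ≤ (p : ℝ) * K ^ (n ^ k) := by
  obtain ⟨F, K, hK, hFS, hF⟩ := exists_finset_hasBoundedRep S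
  have hrange : Set.range (fun i => (F.equivFin.symm i : PolyVec k m)) = F := by
    simpa [Function.comp_def] using F.equivFin.symm.surjective.range_comp (Subtype.val : F → _)
  refine ⟨F.card, fun i => F.equivFin.symm i, K, by exact_mod_cast hK, ?_, ?_⟩
  · rw [hrange]
    exact le_antisymm (Submodule.span_le.2 hFS) fun g hg => (hF g hg).mem_span
  · intro n p g hg _ hn hp
    have hbound : vecNorm g * K ^ vecDeg g ^ k ≤ p * K ^ n ^ k := by gcongr; exact hK.le
    obtain ⟨α, hsum, hsupp, hnorm⟩ := ((hF g hg).mono Finset.Subset.rfl hbound).exists_fin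
    exact ⟨α, hsum, fun i _ => vecDeg_le_iff.2 (hsupp i), by exact_mod_cast hnorm⟩
end
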